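/- arXiv:2511.09493 — 2 statements merged into one kernel-verified Lean document; each statement's English description precedes it below -/
import Mathlib

section
/- Fix integers k ≥ s ≥ 1, probability distributions p_1, …, p_k on Y, R ∈ ℕ, and let q_R be the consensus-sampling output distribution on Y ∪ {⊥}, given by q_R(⊥) = (1 − Z)^R and q_R(y) = (1 − (1 − Z)^R)·g(y)/Z for y ∈ Y when Z > 0, and by the point mass at ⊥ when Z = 0. Let U ⊆ Y, let S ⊆ {1,…,k} with |S| = s, and set ε := (1/s)·Σ_{i∈S} p_i(U). Then q_R(U) ≤ ε·R. -/
/-!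
By Bernoulli's inequality `(1 - Z) ^ R ≥ 1 - R * Z` (valid since `0 ≤ Z ≤ 1`), the output
distribution is dominated pointwise on `Y` by `R * g`. As `g` is a minimum of averages over all
index sets of size `s`, it lies below the average over the given set `S`. Summing
`q_R(y) ≤ avg_S(y) * R` over `U` gives the bound. Summability of `g`, and `Z ≤ 1`, follow from
the comparison `0 ≤ g ≤ avg_S`, where `avg_S` is itself a probability distribution.
-/

open scoped BigOperators

/-- probability that a distribution `p` on `Y` assigns to a set `U ⊆ Y`. -/
noncomputable def probOf {Y : Type*} (p : Y → ℝ) (U : Set Y) : ℝ := ∑' y : U, p (y : Y)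

/-- `p` is a probability distribution: nonnegative and summing to 1. -/
def IsDist {α : Type*} (p : α → ℝ) : Prop := (∀ a, 0 ≤ p a) ∧ HasSum p 1

/-- `g(y) := min over T ⊆ {1,…,k} with |T| = s of avg_T(y)`, the average of the `s`
smallest of the `k` values `p_1(y), …, p_k(y)`. -/
noncomputable def gmin {Y : Type*} {k : ℕ} (s : ℕ) (p : Fin k → Y → ℝ) (y : Y) : ℝ :=
  sInf {v : ℝ | ∃ T : Finset (Fin k), T.card = s ∧ v = (∑ i ∈ T, p i y) / s}

/-- The consensus-sampling output distribution on `Y ∪ {⊥}` (with `⊥ = none`):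
`q_R(⊥) = (1 − Z)^R` and `q_R(y) = (1 − (1 − Z)^R)·g(y)/Z` when `Z > 0`, and the
point mass at `⊥` when `Z = 0`. -/
noncomputable def consensusOut {Y : Type*} (g : Y → ℝ) (Z : ℝ) (R : ℕ) : Option Y → ℝ
  | none => (1 - Z) ^ R
  | some y => if 0 < Z then (1 - (1 - Z) ^ R) * g y / Z else 0

theorem gmin_nonneg {Y : Type*} {k : ℕ} (s : ℕ) (p : Fin k → Y → ℝ)
    (hp : ∀ i y, 0 ≤ p i y) (y : Y) : 0 ≤ gmin s p y := by
  apply Real.sInf_nonneg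
  rintro v ⟨T, -, rfl⟩
  exact div_nonneg (Finset.sum_nonneg fun i _ => hp i y) s.cast_nonneg

theorem gmin_le {Y : Type*} {k : ℕ} (s : ℕ) (p : Fin k → Y → ℝ)
    (hp : ∀ i y, 0 ≤ p i y) (S : Finset (Fin k)) (hS : S.card = s) (y : Y) :
    gmin s p y ≤ 1 / (s : ℝ) * ∑ i ∈ S, p i y := by
  refine csInf_le ⟨0, ?_⟩ ⟨S, hS, by ring⟩
  rintro v ⟨T, -, rfl⟩
  exact div_nonneg (Finset.sum_nonneg fun i _ => hp i y) s.cast_nonneg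

/-- Bernoulli's inequality in the form used for the acceptance probability. -/
theorem one_sub_pow_div_le {Z : ℝ} (h0 : 0 < Z) (h1 : Z ≤ 1) (R : ℕ) :
    (1 - (1 - Z) ^ R) / Z ≤ R := by
  rw [div_le_iff₀ h0]
  have := one_add_mul_le_pow (a := -Z) (by linarith) R
  rw [← sub_eq_add_neg] at this
  linarith

/-- **Adversarial robustness.** If `S` is a set of `s` indices with mean risk
`ε := (1/s)·Σ_{i∈S} p_i(U)`, then the consensus-sampling output distribution satisfies
`q_R(U) ≤ ε·R`. -/
theorem adversarial_robustness
    {Y : Type*} [Countable Y] [Nonempty Y]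
    (k s : ℕ) (hs1 : 1 ≤ s) (hsk : s ≤ k)
    (p : Fin k → Y → ℝ) (hp : ∀ i, IsDist (p i)) (R : ℕ)
    (U : Set Y) (S : Finset (Fin k)) (hScard : S.card = s) :
    (∑' y : U, consensusOut (gmin s p) (∑' y', gmin s p y') R (some (y : Y)))
      ≤ ((1 / (s : ℝ)) * ∑ i ∈ S, probOf (p i) U) * (R : ℝ) := by
  have hp0 : ∀ i y, 0 ≤ p i y := fun i => (hp i).1
  have hg0 := gmin_nonneg s p hp0
  have hgle := gmin_le s p hp0 S hScard
  have hs : (s : ℝ) ≠ 0 := by positivity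
  have havg : HasSum (fun y => 1 / (s : ℝ) * ∑ i ∈ S, p i y) 1 := by
    have h := (hasSum_sum fun i (_ : i ∈ S) => (hp i).2).mul_left (1 / (s : ℝ))
    simpa [hScard, hs] using h
  have hgs : Summable (gmin s p) := Summable.of_nonneg_of_le hg0 hgle havg.summable
  have hZ1 : ∑' y, gmin s p y ≤ 1 := hasSum_le hgle hgs.hasSum havg
  have havgU : HasSum (fun y : U => (1 / (s : ℝ) * ∑ i ∈ S, p i y) * (R : ℝ))
      ((1 / (s : ℝ) * ∑ i ∈ S, probOf (p i) U) * R) :=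
    ((hasSum_sum fun i (_ : i ∈ S) =>
      ((hp i).2.summable.subtype U).hasSum).mul_left _).mul_right _
  generalize ∑' y', gmin s p y' = Z at hZ1 ⊢
  by_cases hZ : 0 < Z
  · simp only [consensusOut, if_pos hZ, mul_div_right_comm]
    refine hasSum_le (fun ⟨y, _⟩ => ?_) ((hgs.subtype U).mul_left _).hasSum havgU
    calc (1 - (1 - Z) ^ R) / Z * gmin s p y
        ≤ R * gmin s p y :=
          mul_le_mul_of_nonneg_right (one_sub_pow_div_le hZ hZ1 R) (hg0 y)
      _ ≤ R * (1 / (s : ℝ) * ∑ i ∈ S, p i y) :=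
          mul_le_mul_of_nonneg_left (hgle y) R.cast_nonneg
      _ = _ := mul_comm _ _
  · simp only [consensusOut, if_neg hZ, tsum_zero]
    refine havgU.nonneg fun y => ?_
    have := (hg0 y).trans (hgle y)
    positivity
end

section
/- Let X (prompts) and M (messages) be countable sets and let ν be a joint probability distribution on X × M with marginal ν_M(m) := Σ_x ν(x,m). Let R ≥ 0 be real. For each x ∈ X let p_x be a probability distribution on Y, and for each (x,m) ∈ X × M let q_{x,m} be a probability distribution on Y ∪ {⊥} with q_{x,m}(y) ≤ R·p_x(y) for every y ∈ Y. For each m with ν_M(m) > 0 define the conditional output distributions Q(z ∣ m) := (1/ν_M(m))·Σ_x ν(x,m)·q_{x,m}(z) for z ∈ Y ∪ {⊥}, and P(y ∣ m) := (1/ν_M(m))·Σ_x ν(x,m)·p_x(y) for y ∈ Y. Then Σ_{z∈Y∪{⊥}} sup{Q(z ∣ m) : m with ν_M(m)>0} ≤ (R + 1)·Σ_{y∈Y} sup{P(y ∣ m) : m with ν_M(m)>0}; equivalently, the maximal leakages satisfy L(M → Q) ≤ log₂(R + 1) + L(M → P). -/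
/-! The maximal leakage sum is split according to whether the output is `⊥` or a symbol of `Y`.
On `Y`, averaging `q_{x,m}(y) ≤ R p_x(y)` over the prompts gives `Q(y ∣ m) ≤ R P(y ∣ m)`, so the
supremum over `m` loses a factor of at most `R`. The remaining term `sup_m Q(⊥ ∣ m)` is at most
`1`, and `1 ≤ Σ_y sup_m P(y ∣ m)`, because already a single `P(· ∣ m₀)` sums to `1` and some `m₀`
has positive mass. -/

open scoped BigOperators ENNReal

lemma IsDist.le_one {α : Type*} {p : α → ℝ} (h : IsDist p) (a : α) : p a ≤ 1 :=
  le_hasSum h.2 a fun b _ => h.1 b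

lemma ENNReal.tsum_option_eq {Y : Type*} (f : Option Y → ℝ≥0∞) :
    ∑' z, f z = f none + ∑' y, f (some y) := by
  rw [← (Equiv.optionEquivSumPUnit.{0} Y).symm.tsum_eq f,
    Summable.tsum_sum ENNReal.summable ENNReal.summable, add_comm]
  simp

lemma summable_mul_of_le_one {X : Type*} {w c : X → ℝ} (hw : ∀ x, 0 ≤ w x) (hs : Summable w)
    (hc : ∀ x, 0 ≤ c x) (hc1 : ∀ x, c x ≤ 1) : Summable fun x => w x * c x :=
  Summable.of_nonneg_of_le (fun x => mul_nonneg (hw x) (hc x))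
    (fun x => mul_le_of_le_one_right (hw x) (hc1 x)) hs

/-- A mixture of probability distributions, with normalized weights `w`, has total mass `1`. -/
lemma tsum_mixture {X Y : Type*} {w : X → ℝ} (hw : ∀ x, 0 ≤ w x) (hs : Summable w)
    (hpos : 0 < ∑' x, w x) {p : X → Y → ℝ} (hp : ∀ x, IsDist (p x)) :
    ∑' y, ENNReal.ofReal ((∑' x, w x * p x y) / ∑' x, w x) = 1 := by
  have hp1 (x : X) : ∑' y, ENNReal.ofReal (p x y) = 1 := by
    rw [← ENNReal.ofReal_tsum_of_nonneg (hp x).1 (hp x).2.summable, (hp x).2.tsum_eq,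
      ENNReal.ofReal_one]
  have key (y : Y) : ENNReal.ofReal ((∑' x, w x * p x y) / ∑' x, w x)
      = (∑' x, ENNReal.ofReal (w x) * ENNReal.ofReal (p x y)) * (ENNReal.ofReal (∑' x, w x))⁻¹ := by
    rw [ENNReal.ofReal_div_of_pos hpos, div_eq_mul_inv,
      ENNReal.ofReal_tsum_of_nonneg (fun x => mul_nonneg (hw x) ((hp x).1 y))
        (summable_mul_of_le_one hw hs (fun x => (hp x).1 y) (fun x => (hp x).le_one y))]
    simp_rw [ENNReal.ofReal_mul (hw _)]
  simp_rw [key]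
  rw [ENNReal.tsum_mul_right, ENNReal.tsum_comm]
  simp_rw [ENNReal.tsum_mul_left, hp1, mul_one]
  rw [← ENNReal.ofReal_tsum_of_nonneg hw hs]
  exact ENNReal.mul_inv_cancel (by simpa using hpos) ENNReal.ofReal_ne_top

/-- **Maximal leakage bound.** With joint prompt/message distribution `ν`, safe distributions
`p_x` and `R`-risky sampling distributions `q_{x,m}`, the conditional output distributions
`Q(z∣m)` and `P(y∣m)` satisfy
`Σ_z sup_m Q(z∣m) ≤ (R+1)·Σ_y sup_m P(y∣m)` (suprema over `m` with `ν_M(m) > 0`), i.e.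
the maximal leakages satisfy `L(M → Q) ≤ log₂(R+1) + L(M → P)`. -/
theorem maximal_leakage_bound
    {Y X M : Type*} [Countable Y] [Nonempty Y] [Countable X] [Countable M]
    (ν : X × M → ℝ) (hν : IsDist ν)
    (R : ℝ) (hR : 0 ≤ R)
    (p : X → Y → ℝ) (hp : ∀ x, IsDist (p x))
    (q : X → M → Option Y → ℝ) (hq : ∀ x m, IsDist (q x m))
    (hrisky : ∀ x m y, q x m (some y) ≤ R * p x y) :
    (∑' z : Option Y, ⨆ m : {m : M // 0 < ∑' x, ν (x, m)},
        ENNReal.ofReal ((∑' x, ν (x, (m : M)) * q x (m : M) z) / (∑' x, ν (x, (m : M)))))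
      ≤ ENNReal.ofReal (R + 1) *
        ∑' y : Y, ⨆ m : {m : M // 0 < ∑' x, ν (x, m)},
          ENNReal.ofReal ((∑' x, ν (x, (m : M)) * p x y) / (∑' x, ν (x, (m : M)))) := by
  have hs (m : M) : Summable fun x => ν (x, m) :=
    hν.2.summable.comp_injective (Prod.mk_left_injective m)
  have hw (m : M) (x : X) : 0 ≤ ν (x, m) := hν.1 _
  obtain ⟨m₀, hm₀⟩ : ∃ m, 0 < ∑' x, ν (x, m) := by
    by_contra! h
    have hz (a : X × M) : ν a = 0 :=
      le_antisymm (((hs a.2).le_tsum a.1 fun x _ => hw a.2 x).trans (h a.2)) (hν.1 a)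
    have h1 := hν.2.tsum_eq
    simp [hz] at h1
  set S : ℝ≥0∞ := ∑' y : Y, ⨆ m : {m : M // 0 < ∑' x, ν (x, m)},
    ENNReal.ofReal ((∑' x, ν (x, (m : M)) * p x y) / (∑' x, ν (x, (m : M)))) with hS
  have hS1 : 1 ≤ S := by
    rw [← tsum_mixture (hw m₀) (hs m₀) hm₀ hp, hS]
    exact ENNReal.tsum_le_tsum fun y => le_iSup_of_le ⟨m₀, hm₀⟩ le_rfl
  rw [ENNReal.tsum_option_eq, ENNReal.ofReal_add hR zero_le_one, ENNReal.ofReal_one, add_mul,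
    one_mul, add_comm]
  refine add_le_add ?_ (le_trans ?_ hS1)
  · rw [hS, ← ENNReal.tsum_mul_left]
    refine ENNReal.tsum_le_tsum fun y => iSup_le fun m => ?_
    rw [ENNReal.mul_iSup]
    refine le_iSup_of_le m ?_
    rw [← ENNReal.ofReal_mul hR, ← mul_div_assoc, ← tsum_mul_left]
    refine ENNReal.ofReal_le_ofReal (div_le_div_of_nonneg_right ?_ m.2.le)
    refine Summable.tsum_le_tsum (fun x => ?_)
      (summable_mul_of_le_one (hw m) (hs m) (fun x => (hq x m).1 _) fun x => (hq x m).le_one _)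
      ((summable_mul_of_le_one (hw m) (hs m) (fun x => (hp x).1 y)
        fun x => (hp x).le_one y).mul_left R)
    calc ν (x, (m : M)) * q x m (some y) ≤ ν (x, (m : M)) * (R * p x y) :=
          mul_le_mul_of_nonneg_left (hrisky x m y) (hw m x)
      _ = R * (ν (x, (m : M)) * p x y) := by ring
  · refine iSup_le fun m => ?_
    rw [← tsum_mixture (hw m) (hs m) m.2 fun x => hq x m]
    exact ENNReal.le_tsum none
end
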